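/- (Duality of the λ and 1-λ quantizations.) For every real λ with 0 < λ < 1 and all natural numbers n and m, the integral ∫_0^∞ π_n^{(λ)}(μ) · π_m^{(1-λ)}(μ) dμ equals 1 if n = m and 0 otherwise. -/

import Mathlib

open MeasureTheory

/-- The `n`-th Laguerre polynomial, `L n x = ∑_{j=0}^n (-1)^j C(n,j) x^j / j!`. -/
noncomputable def laguerre (n : ℕ) (x : ℝ) : ℝ :=
  ∑ j ∈ Finset.range (n + 1), (-1 : ℝ) ^ j * (n.choose j) * x ^ j / (j.factorial)

/-- The quantum state function `π_n^{(λ)}` of the `λ`-quantization. -/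
noncomputable def piQuant (lam : ℝ) (n : ℕ) (μ : ℝ) : ℝ :=
  (1 / (1 - lam)) * (-lam / (1 - lam)) ^ n * laguerre n (μ / (lam * (1 - lam))) *
    Real.exp (-μ / (1 - lam))

/-!
The substitution `x = μ / (λ (1 - λ))` turns the two exponential weights into the single weight
`exp (-x)`, because `1 / (1 - λ) + 1 / λ = 1 / (λ (1 - λ))`, and the two prefactors
`-λ / (1 - λ)` and `-(1 - λ) / λ` are inverse to each other. The duality is therefore the
orthonormality of the Laguerre polynomials for `exp (-x)` on `(0, ∞)`.

Since `∫ x ^ k * exp (-x) = k!`, the `k`-th moment of `L_m` is `k!` times an alternating binomial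
sum, that is, up to sign, an `m`-th forward difference of a binomial coefficient; it equals
`(-1) ^ m * k! * C(k, m)`. Expanding `L_n` in powers of `x` leaves one more such sum, the
`n`-th forward difference of `C(·, m)` at `0`, which is `1` if `n = m` and `0` otherwise.
-/

section ForwardDifference

theorem sum_neg_one_pow_mul_choose_smul_shift {M G : Type*} [AddCommMonoid M] [AddCommGroup G]
    (h : M) (f : M → G) (n : ℕ) (y : M) :
    ∑ j ∈ Finset.range (n + 1), ((-1 : ℤ) ^ j * n.choose j) • f (y + j • h) =
      (-1 : ℤ) ^ n • (fwdDiff h)^[n] f y := by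
  rw [fwdDiff_iter_eq_sum_shift, Finset.smul_sum]
  refine Finset.sum_congr rfl fun j hj ↦ ?_
  have sign_eq : (-1 : ℤ) ^ j = (-1) ^ n * (-1) ^ (n - j) := by
    have hjn : n + (n - j) = 2 * (n - j) + j := by have := Finset.mem_range.1 hj; omega
    rw [← pow_add, hjn, pow_add, pow_mul, neg_one_sq, one_pow, one_mul]
  rw [smul_smul, sign_eq, mul_assoc]

theorem fwdDiff_iter_choose_of_lt {k n : ℕ} (h : k < n) :
    (fwdDiff 1)^[n] (fun x ↦ x.choose k : ℕ → ℤ) = fun _ ↦ 0 := by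
  obtain ⟨d, rfl⟩ := Nat.exists_eq_add_of_lt h
  have iter_k : (fwdDiff 1)^[k] (fun x ↦ x.choose k : ℕ → ℤ) = fun _ ↦ 1 := by
    simpa using fwdDiff_iter_choose 0 k
  rw [show k + d + 1 = (d + 1) + k by ring, Function.iterate_add_apply, iter_k,
    Function.iterate_succ_apply, fwdDiff_const]
  exact Function.iterate_fixed (fwdDiff_const 1 0) d

theorem fwdDiff_iter_choose_self (n k : ℕ) :
    (fwdDiff 1)^[n] (fun x ↦ x.choose k : ℕ → ℤ) k = k.choose n := by
  rcases lt_or_ge k n with hkn | hnk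
  · rw [fwdDiff_iter_choose_of_lt hkn, Nat.choose_eq_zero_of_lt hkn, Nat.cast_zero]
  · obtain ⟨d, rfl⟩ := Nat.exists_eq_add_of_le hnk
    rw [fwdDiff_iter_choose, Nat.choose_symm_add]

theorem sum_neg_one_pow_mul_choose_mul_add_choose (n k : ℕ) :
    ∑ j ∈ Finset.range (n + 1), (-1 : ℤ) ^ j * n.choose j * (k + j).choose k =
      (-1) ^ n * k.choose n := by
  simpa [fwdDiff_iter_choose_self] using
    sum_neg_one_pow_mul_choose_smul_shift 1 (fun x ↦ x.choose k : ℕ → ℤ) n k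

theorem sum_neg_one_pow_mul_choose_mul_choose (n k : ℕ) :
    ∑ j ∈ Finset.range (n + 1), (-1 : ℤ) ^ j * n.choose j * j.choose k =
      if n = k then (-1) ^ n else 0 := by
  simpa [fwdDiff_iter_choose_zero] using
    sum_neg_one_pow_mul_choose_smul_shift 1 (fun x ↦ x.choose k : ℕ → ℤ) n 0

end ForwardDifference

section LaguerreOrthogonality

theorem integrableOn_pow_mul_exp_neg_Ioi (k : ℕ) :
    IntegrableOn (fun x : ℝ ↦ x ^ k * Real.exp (-x)) (Set.Ioi 0) := by
  simpa [mul_comm] using Real.GammaIntegral_convergent (s := k + 1) (by positivity)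

theorem integral_pow_mul_exp_neg_Ioi (k : ℕ) :
    ∫ x in Set.Ioi (0 : ℝ), x ^ k * Real.exp (-x) = k.factorial := by
  rw [← Real.Gamma_nat_eq_factorial, Real.Gamma_eq_integral (by positivity)]
  simp [mul_comm]

theorem pow_mul_laguerre_mul_exp_neg_eq_sum (k n : ℕ) (x : ℝ) :
    x ^ k * laguerre n x * Real.exp (-x) =
      ∑ j ∈ Finset.range (n + 1),
        (-1) ^ j * n.choose j / j.factorial * (x ^ (k + j) * Real.exp (-x)) := by
  rw [laguerre, Finset.mul_sum, Finset.sum_mul]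
  exact Finset.sum_congr rfl fun j _ ↦ by ring

theorem integrableOn_pow_mul_laguerre_mul_exp_neg_Ioi (k n : ℕ) :
    IntegrableOn (fun x ↦ x ^ k * laguerre n x * Real.exp (-x)) (Set.Ioi 0) := by
  simp only [pow_mul_laguerre_mul_exp_neg_eq_sum]
  exact integrable_finsetSum _ fun j _ ↦ (integrableOn_pow_mul_exp_neg_Ioi (k + j)).const_mul _

theorem integral_pow_mul_laguerre_mul_exp_neg_Ioi (k n : ℕ) :
    ∫ x in Set.Ioi (0 : ℝ), x ^ k * laguerre n x * Real.exp (-x) =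
      (-1) ^ n * k.factorial * k.choose n := by
  have binomial_sum : ∑ j ∈ Finset.range (n + 1), (-1 : ℝ) ^ j * n.choose j * (k + j).choose k =
      (-1) ^ n * k.choose n :=
    mod_cast sum_neg_one_pow_mul_choose_mul_add_choose n k
  simp only [pow_mul_laguerre_mul_exp_neg_eq_sum]
  rw [integral_finsetSum _ fun j _ ↦ (integrableOn_pow_mul_exp_neg_Ioi (k + j)).const_mul _]
  calc ∑ j ∈ Finset.range (n + 1), ∫ x in Set.Ioi (0 : ℝ),
        (-1) ^ j * n.choose j / j.factorial * (x ^ (k + j) * Real.exp (-x))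
    _ = ∑ j ∈ Finset.range (n + 1),
        k.factorial * ((-1 : ℝ) ^ j * n.choose j * (k + j).choose k) := by
      refine Finset.sum_congr rfl fun j _ ↦ ?_
      rw [integral_const_mul, integral_pow_mul_exp_neg_Ioi, Nat.cast_add_choose]
      field_simp
    _ = (-1) ^ n * k.factorial * k.choose n := by
      rw [← Finset.mul_sum, binomial_sum]
      ring

theorem integral_laguerre_mul_laguerre_mul_exp_neg_Ioi (n m : ℕ) :
    ∫ x in Set.Ioi (0 : ℝ), laguerre n x * laguerre m x * Real.exp (-x) =
      if n = m then 1 else 0 := by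
  have expand (x : ℝ) : laguerre n x * laguerre m x * Real.exp (-x) =
      ∑ j ∈ Finset.range (n + 1),
        (-1) ^ j * n.choose j / j.factorial * (x ^ j * laguerre m x * Real.exp (-x)) := by
    rw [laguerre, Finset.sum_mul, Finset.sum_mul]
    exact Finset.sum_congr rfl fun j _ ↦ by ring
  have binomial_sum : ∑ j ∈ Finset.range (n + 1), (-1 : ℝ) ^ j * n.choose j * j.choose m =
      if n = m then (-1) ^ n else 0 :=
    mod_cast sum_neg_one_pow_mul_choose_mul_choose n m
  simp only [expand]
  rw [integral_finsetSum _ fun j _ ↦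
    (integrableOn_pow_mul_laguerre_mul_exp_neg_Ioi j m).const_mul _]
  calc ∑ j ∈ Finset.range (n + 1), ∫ x in Set.Ioi (0 : ℝ),
        (-1) ^ j * n.choose j / j.factorial * (x ^ j * laguerre m x * Real.exp (-x))
    _ = ∑ j ∈ Finset.range (n + 1), (-1) ^ m * ((-1 : ℝ) ^ j * n.choose j * j.choose m) := by
      refine Finset.sum_congr rfl fun j _ ↦ ?_
      rw [integral_const_mul, integral_pow_mul_laguerre_mul_exp_neg_Ioi]
      field_simp
    _ = if n = m then 1 else 0 := by
      rw [← Finset.mul_sum, binomial_sum]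
      split_ifs with hnm
      · rw [hnm, ← mul_pow, neg_one_mul, neg_neg, one_pow]
      · rw [mul_zero]

end LaguerreOrthogonality

theorem piQuant_mul_piQuant_one_sub {lam : ℝ} (h0 : lam ≠ 0) (h1 : 1 - lam ≠ 0) (n m : ℕ)
    (μ : ℝ) :
    piQuant lam n μ * piQuant (1 - lam) m μ =
      (lam * (1 - lam))⁻¹ * ((-lam / (1 - lam)) ^ n / (-lam / (1 - lam)) ^ m) *
        (laguerre n ((lam * (1 - lam))⁻¹ * μ) * laguerre m ((lam * (1 - lam))⁻¹ * μ) *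
          Real.exp (-((lam * (1 - lam))⁻¹ * μ))) := by
  have exp_eq : Real.exp (-((lam * (1 - lam))⁻¹ * μ)) =
      Real.exp (-μ / (1 - lam)) * Real.exp (-μ / lam) := by
    rw [← Real.exp_add]
    congr 1
    field_simp
    ring
  have prefactor_eq : -(1 - lam) / lam = (-lam / (1 - lam))⁻¹ := by
    rw [inv_div, neg_div, div_neg]
  simp only [piQuant, sub_sub_cancel]
  rw [exp_eq, prefactor_eq, mul_comm (1 - lam) lam, div_eq_inv_mul μ, inv_pow, mul_inv]
  ring

/-- Duality between the `λ` and `1-λ` quantizations. -/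
theorem piQuant_duality (lam : ℝ) (hlam0 : 0 < lam) (hlam1 : lam < 1) (n m : ℕ) :
    ∫ μ in Set.Ioi (0 : ℝ), piQuant lam n μ * piQuant (1 - lam) m μ =
      if n = m then 1 else 0 := by
  have one_sub_pos : 0 < 1 - lam := sub_pos.2 hlam1
  have scale_pos : 0 < (lam * (1 - lam))⁻¹ := by positivity
  have prefactor_ne_zero : -lam / (1 - lam) ≠ 0 :=
    div_ne_zero (neg_ne_zero.2 hlam0.ne') one_sub_pos.ne'
  simp only [piQuant_mul_piQuant_one_sub hlam0.ne' one_sub_pos.ne']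
  rw [integral_const_mul,
    integral_comp_mul_left_Ioi (fun x ↦ laguerre n x * laguerre m x * Real.exp (-x)) 0 scale_pos,
    mul_zero, integral_laguerre_mul_laguerre_mul_exp_neg_Ioi, smul_eq_mul]
  split_ifs with hnm
  · rw [hnm, div_self (pow_ne_zero m prefactor_ne_zero), mul_one, mul_one,
      mul_inv_cancel₀ scale_pos.ne']
  · rw [mul_zero, mul_zero]
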